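/- Let Ω ⊆ ℝⁿ be a bounded open set that is star-shaped with respect to x* ∈ Ω and let g : Ω → ℝ be continuous. Let u : Ω → ℝ be an upper semicontinuous viscosity subsolution of min{ u(x) − g(x), (x − x*) · ∇u(x) } = 0 on Ω with u(x*) ≤ g(x*), and let v : Ω → ℝ be a lower semicontinuous viscosity supersolution of the same equation. Then u ≤ v on Ω. -/

import Mathlib

open Set

/-- A set `S` is star-shaped with respect to a point `c`. -/
def StarShapedSet {n : ℕ} (S : Set (EuclideanSpace ℝ (Fin n)))
    (c : EuclideanSpace ℝ (Fin n)) : Prop :=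
  ∀ x ∈ S, ∀ t ∈ Icc (0 : ℝ) 1, t • c + (1 - t) • x ∈ S

theorem quad_contDiff {E : Type*} [NormedAddCommGroup E] [InnerProductSpace ℝ E] (k : ℝ) (b : E) :
    ContDiff ℝ 1 (fun y : E => k * ‖y - b‖^2) :=
  contDiff_const.mul ((contDiff_id.sub contDiff_const).norm_sq ℝ)

theorem quad_hasFDerivAt {E : Type*} [NormedAddCommGroup E] [InnerProductSpace ℝ E] (k : ℝ)
    (a b : E) : ∃ L : E →L[ℝ] ℝ, HasFDerivAt (fun y : E => k * ‖y - b‖^2) L a ∧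
      ∀ w, L w = k * (2 * inner ℝ (a - b) w) :=
  ⟨_, (((hasFDerivAt_id a).sub_const b).norm_sq).const_mul k, fun w => by simp [inner_sub_left]⟩

theorem posq_hasDerivAt (x : ℝ) : HasDerivAt (fun t : ℝ => (max 0 t)^2) (2 * max 0 x) x := by
  rcases lt_trichotomy x 0 with h | h | h
  · have : HasDerivAt (fun _ : ℝ => (0:ℝ)) 0 x := hasDerivAt_const _ _
    rw [max_eq_left h.le, mul_zero]
    refine this.congr_of_eventuallyEq ?_
    filter_upwards [Iio_mem_nhds h] with t ht
    have ht' : t ≤ 0 := le_of_lt (mem_Iio.1 ht)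
    simp [max_eq_left ht']
  · subst h
    rw [hasDerivAt_iff_isLittleO]
    simp only [max_self, sub_zero]
    have h1 : (fun t : ℝ => (max 0 t)^2) =O[nhds 0] (fun t : ℝ => t^2) := by
      refine Asymptotics.IsBigO.of_bound 1 (Filter.Eventually.of_forall fun t => ?_)
      simp only [norm_pow, one_mul, Real.norm_eq_abs]
      rcases le_total 0 t with h | h
      · simp [h]
      · rw [max_eq_left h]; simpa using sq_nonneg t
    have h2 : (fun t : ℝ => t^2) =o[nhds 0] (fun t : ℝ => t) := by
      simpa using Asymptotics.isLittleO_pow_id (𝕜 := ℝ) (n := 2) (by norm_num)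
    simpa using h1.trans_isLittleO h2
  · have : HasDerivAt (fun t : ℝ => t^2) (2 * x) x := by simpa using hasDerivAt_pow 2 x
    rw [max_eq_right h.le]
    refine this.congr_of_eventuallyEq ?_
    filter_upwards [Ioi_mem_nhds h] with t ht
    have ht' : 0 ≤ t := le_of_lt (mem_Ioi.1 ht)
    simp only [max_eq_right ht']

theorem posq_contDiff : ContDiff ℝ 1 (fun t : ℝ => (max 0 t)^2) := by
  rw [contDiff_one_iff_deriv]
  refine ⟨fun x => (posq_hasDerivAt x).differentiableAt, ?_⟩
  have : deriv (fun t : ℝ => (max 0 t)^2) = fun x => 2 * max 0 x :=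
    funext fun x => (posq_hasDerivAt x).deriv
  rw [this]; fun_prop

theorem exists_pen {n : ℕ} (xs e : EuclideanSpace ℝ (Fin n)) (N ε : ℝ) (hN : 0 ≤ N) (hε : 0 < ε) :
    ∃ ψ : EuclideanSpace ℝ (Fin n) → ℝ, ContDiff ℝ 1 ψ ∧ (∀ y, 0 ≤ ψ y) ∧
      (∀ y, y ≠ xs → 0 < fderiv ℝ ψ y (y - xs)) ∧ ψ (xs + e) ≤ ε ∧
      ∀ y, ∃ c ∈ Icc (0:ℝ) 1, N * dist y (xs + c • e) ^ 2 ≤ ψ y := by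
  set a : ℝ := ε / (‖e‖^2 + 1) with ha
  have ha0 : 0 < a := by positivity
  let s : EuclideanSpace ℝ (Fin n) → ℝ := fun y => inner ℝ (y - xs) e / ‖e‖^2
  let ψ : EuclideanSpace ℝ (Fin n) → ℝ := fun y => a * ‖y - xs‖^2 + N * (‖(y - xs) - s y • e‖^2
      + ‖e‖^2 * ((max 0 (-(s y)))^2 + (max 0 (s y - 1))^2))
  have hs : ContDiff ℝ 1 s := by
    simp only [s]
    exact ((contDiff_id.sub contDiff_const).inner ℝ contDiff_const).div_const _
  have hψ : ContDiff ℝ 1 ψ := by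
    have h1 := posq_contDiff.comp hs.neg
    have h2 := posq_contDiff.comp (hs.sub (contDiff_const (c := (1:ℝ))))
    have h3 : ContDiff ℝ 1 (fun y : EuclideanSpace ℝ (Fin n) => y - xs) := by fun_prop
    have h4 := (h3.sub (hs.smul (contDiff_const (c := e)))).norm_sq ℝ
    exact (contDiff_const.mul (h3.norm_sq ℝ)).add (contDiff_const.mul
      (h4.add (contDiff_const.mul (h1.add h2))))
  refine ⟨ψ, hψ, fun y => by positivity, ?_, ?_, ?_⟩
  · intro y hy
    have hw : 0 < ‖y - xs‖^2 := by
      have := norm_pos_iff.2 (sub_ne_zero.2 hy); positivity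
    set w := y - xs with hwdef
    set σ := s y with hσ
    have hray : (fun τ : ℝ => ψ (xs + τ • w)) = fun τ => a * (τ^2 * ‖w‖^2) + N * (τ^2 * ‖w - σ • e‖^2
        + ‖e‖^2 * ((max 0 (τ * (-σ)))^2 + (max 0 (τ * σ - 1))^2)) := by
      funext τ
      have hst : s (xs + τ • w) = τ * σ := by
        simp only [s, hσ, add_sub_cancel_left, inner_smul_left, ← hwdef]
        simp [mul_div_assoc]
      simp only [ψ, hst, add_sub_cancel_left]
      rw [show τ • w - (τ * σ) • e = τ • (w - σ • e) by rw [smul_sub _ w, smul_smul]]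
      simp only [norm_smul, mul_pow, Real.norm_eq_abs, sq_abs, mul_neg]
    have hd2 : HasDerivAt (fun τ : ℝ => τ^2) 2 1 := by simpa using hasDerivAt_pow 2 (1:ℝ)
    have hA : HasDerivAt (fun τ : ℝ => (max 0 (τ * (-σ)))^2) (2 * max 0 (1 * (-σ)) * (-σ)) 1 :=
      HasDerivAt.comp (1:ℝ) (posq_hasDerivAt _) (by simpa using (hasDerivAt_id (1:ℝ)).mul_const (-σ))
    have hB : HasDerivAt (fun τ : ℝ => (max 0 (τ * σ - 1))^2) (2 * max 0 (1 * σ - 1) * σ) 1 :=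
      HasDerivAt.comp (1:ℝ) (posq_hasDerivAt _)
        (by simpa using ((hasDerivAt_id (1:ℝ)).mul_const σ).sub_const 1)
    have hD := ((hd2.mul_const (‖w‖^2)).const_mul a).add (((hd2.mul_const (‖w - σ • e‖^2)).add
      ((hA.add hB).const_mul (‖e‖^2))).const_mul N)
    have hE : HasDerivAt (fun τ : ℝ => ψ (xs + τ • w)) (fderiv ℝ ψ y w) 1 := by
      have hy1 : xs + (1:ℝ) • w = y := by simp [hwdef]
      have hl : HasDerivAt (fun τ : ℝ => xs + τ • w) w 1 := by
        simpa using ((hasDerivAt_id (1:ℝ)).smul_const w).const_add xs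
      have hf : HasFDerivAt ψ (fderiv ℝ ψ y) (xs + (1:ℝ) • w) := by
        rw [hy1]; exact (hψ.differentiable (by norm_num) y).hasFDerivAt
      exact hf.comp_hasDerivAt 1 hl
    rw [hray] at hE
    rw [hE.unique hD]
    have q1 : 0 ≤ 2 * max 0 (1 * (-σ)) * (-σ) := by
      rcases le_total σ 0 with h | h
      · have : 0 ≤ -σ := by linarith
        positivity
      · rw [max_eq_left (by linarith)]; simp
    have q2 : 0 ≤ 2 * max 0 (1 * σ - 1) * σ := by
      rcases le_total σ 0 with h | h
      · rw [max_eq_left (by linarith)]; simp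
      · positivity
    have q3 := add_nonneg q1 q2
    positivity
  · have hse : s (xs + e) • e = e ∧ (s (xs + e) = 1 ∨ s (xs+e) = 0) := by
      simp only [s, add_sub_cancel_left, real_inner_self_eq_norm_sq]
      by_cases h : e = 0
      · simp [h]
      · have : ‖e‖^2 ≠ 0 := by simpa using h
        rw [div_self this]; simp
    have : ψ (xs + e) = a * ‖e‖^2 := by
      simp only [ψ, hse.1, add_sub_cancel_left, sub_self]
      rcases hse.2 with h | h <;> simp [h]
    rw [this, ha, div_mul_eq_mul_div, div_le_iff₀ (by positivity)]
    nlinarith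
  · intro y
    have horth : inner ℝ ((y - xs) - s y • e) e = 0 := by
      rw [inner_sub_left, inner_smul_left, real_inner_self_eq_norm_sq]
      simp only [s]
      by_cases h : e = 0
      · simp [h]
      · have : ‖e‖^2 ≠ 0 := by simpa using h
        simp only [conj_trivial]
        rw [div_mul_cancel₀ _ this, sub_self]
    have key : ∀ c : ℝ, dist y (xs + c • e)^2 = ‖(y - xs) - s y • e‖^2 + ‖e‖^2 * (s y - c)^2 := by
      intro c
      rw [dist_eq_norm, show y - (xs + c • e) = ((y - xs) - s y • e) + (s y - c) • e by
        rw [sub_smul]; abel, norm_add_sq_real, inner_smul_right, horth, norm_smul, mul_pow,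
        Real.norm_eq_abs, sq_abs]
      ring
    have hc : ∃ c ∈ Icc (0:ℝ) 1, (s y - c)^2 = (max 0 (-(s y)))^2 + (max 0 (s y - 1))^2 := by
      rcases le_total (s y) 0 with h | h
      · refine ⟨0, by simp, ?_⟩
        rw [max_eq_right (by linarith), max_eq_left (by linarith)]; ring
      · rcases le_total (s y) 1 with h' | h'
        · refine ⟨s y, ⟨h, h'⟩, ?_⟩
          rw [max_eq_left (by linarith), max_eq_left (by linarith)]; ring
        · refine ⟨1, by simp, ?_⟩
          rw [max_eq_left (by linarith), max_eq_right (by linarith)]; ring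
    obtain ⟨c, hc, h⟩ := hc
    refine ⟨c, hc, ?_⟩
    rw [key, h]
    simp only [ψ]
    have : 0 ≤ a * ‖y - xs‖^2 := by positivity
    linarith

theorem comparison_principle {n : ℕ}
    (Ω : Set (EuclideanSpace ℝ (Fin n))) (hΩo : IsOpen Ω)
    (hΩb : Bornology.IsBounded Ω)
    (xs : EuclideanSpace ℝ (Fin n)) (hxs : xs ∈ Ω) (hΩ : StarShapedSet Ω xs)
    (g : EuclideanSpace ℝ (Fin n) → ℝ) (hg : ContinuousOn g Ω)
    (u : EuclideanSpace ℝ (Fin n) → ℝ) (husc : UpperSemicontinuousOn u Ω)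
    (hsub : ∀ φ : EuclideanSpace ℝ (Fin n) → ℝ, ContDiff ℝ 1 φ →
      ∀ x ∈ Ω, IsLocalMaxOn (fun y => u y - φ y) Ω x →
        min (u x - g x) (fderiv ℝ φ x (x - xs)) ≤ 0)
    (huxs : u xs ≤ g xs)
    (v : EuclideanSpace ℝ (Fin n) → ℝ) (hlsc : LowerSemicontinuousOn v Ω)
    (hsup : ∀ φ : EuclideanSpace ℝ (Fin n) → ℝ, ContDiff ℝ 1 φ →
      ∀ x ∈ Ω, IsLocalMinOn (fun y => v y - φ y) Ω x →
        0 ≤ min (v x - g x) (fderiv ℝ φ x (x - xs))) :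
    ∀ x ∈ Ω, u x ≤ v x := by
  intro x0 hx0
  by_contra! hlt
  obtain ⟨e, rfl⟩ : ∃ e, x0 = xs + e := ⟨x0 - xs, by abel⟩
  set δ := u (xs + e) - v (xs + e) with hδ
  have hδ0 : 0 < δ := by linarith
  set K : Set (EuclideanSpace ℝ (Fin n)) := (fun c : ℝ => xs + c • e) '' Icc (0:ℝ) 1 with hK
  have hKc : IsCompact K := isCompact_Icc.image (by fun_prop)
  have hKΩ : K ⊆ Ω := by
    rintro _ ⟨c, hc, rfl⟩
    have := hΩ _ hx0 (1 - c) ⟨by linarith [hc.2], by linarith [hc.1]⟩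
    convert this using 1
    simp only [sub_sub_cancel, smul_add, sub_smul, one_smul]
    abel
  obtain ⟨r, hr, hrΩ⟩ := hKc.exists_cthickening_subset_open hΩo hKΩ
  set F := Metric.cthickening r K with hF
  have hFc : IsCompact F := hKc.cthickening
  have hx0K : xs + e ∈ K := ⟨1, by simp, by simp⟩
  have hx0F : xs + e ∈ F := Metric.self_subset_cthickening K hx0K
  have hnear : ∀ y, ∀ p ∈ K, dist y p < r → F ∈ nhds y := by
    intro y p hp hd
    refine Filter.mem_of_superset (Metric.isOpen_thickening.mem_nhds
      (Metric.mem_thickening_iff.2 ⟨p, hp, hd⟩)) (Metric.thickening_subset_cthickening r K)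
  obtain ⟨U, hU⟩ := (husc.mono hrΩ).bddAbove_of_isCompact hFc
  obtain ⟨V, hV⟩ := (hlsc.mono hrΩ).bddBelow_of_isCompact hFc
  have hU' : ∀ y ∈ F, u y ≤ U := fun y hy => hU (mem_image_of_mem _ hy)
  have hV' : ∀ y ∈ F, V ≤ v y := fun y hy => hV (mem_image_of_mem _ hy)
  have hUV : 0 < U - V := by linarith [hU' _ hx0F, hV' _ hx0F]
  have hgu := hFc.uniformContinuousOn_of_continuous (hg.mono hrΩ)
  rw [Metric.uniformContinuousOn_iff] at hgu
  obtain ⟨η, hη, hgη⟩ := hgu (δ/2) (by linarith)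
  set N := (U - V) / (r/2)^2 with hN
  obtain ⟨ψ, hψ, hψ0, hψd, hψe, hψc⟩ := exists_pen xs e N (δ/2) (by positivity) (by linarith)
  set ρ := min (r/2) η with hρ
  have hρ0 : 0 < ρ := lt_min (by linarith) hη
  set k := (U - V) / ρ^2 with hk
  have hk0 : 0 < k := by positivity
  have husc2 : UpperSemicontinuousOn (fun p : EuclideanSpace ℝ (Fin n) × EuclideanSpace ℝ (Fin n) =>
      (u p.1 + -v p.2) + -(k * ‖p.1 - p.2‖^2 + ψ p.1)) (F ×ˢ F) := by
    refine UpperSemicontinuousOn.add (UpperSemicontinuousOn.add ?_ ?_) ?_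
    · exact (husc.mono hrΩ).comp continuousOn_fst (fun p hp => hp.1)
    · have h1 : LowerSemicontinuousOn (fun p : EuclideanSpace ℝ (Fin n) × EuclideanSpace ℝ (Fin n) =>
          v p.2) (F ×ˢ F) := (hlsc.mono hrΩ).comp continuousOn_snd (fun p hp => hp.2)
      intro p hp c hc
      have hc' : -c < v p.2 := by
        have : -v p.2 < c := hc
        linarith
      filter_upwards [h1 p hp (-c) hc'] with q hq
      have : -c < v q.2 := hq
      linarith
    · have := hψ.continuous
      exact (by fun_prop : Continuous (fun p : EuclideanSpace ℝ (Fin n) × EuclideanSpace ℝ (Fin n) =>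
        -(k * ‖p.1 - p.2‖^2 + ψ p.1))).continuousOn.upperSemicontinuousOn
  obtain ⟨⟨y, z⟩, ⟨hy, hz⟩, hmax⟩ := husc2.exists_isMaxOn
    ⟨(xs + e, xs + e), mk_mem_prod hx0F hx0F⟩
    (hFc.prod hFc)
  simp only at hy hz
  have hmax' : ∀ y' ∈ F, ∀ z' ∈ F, (u y' + -v z') + -(k * ‖y' - z'‖^2 + ψ y') ≤
      (u y + -v z) + -(k * ‖y - z‖^2 + ψ y) := fun y' hy' z' hz' =>
    hmax (show (y', z') ∈ F ×ˢ F from ⟨hy', hz'⟩)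
  have h0 := hmax' _ hx0F _ hx0F
  simp only [sub_self, norm_zero] at h0
  have h0' : δ / 2 + k * ‖y - z‖^2 + ψ y ≤ u y - v z := by
    have : k * (0:ℝ)^2 = 0 := by ring
    linarith
  have hbd : u y - v z ≤ U - V := by linarith [hU' _ hy, hV' _ hz]
  have hkn : 0 ≤ k * ‖y - z‖^2 := by positivity
  have hyz : ‖y - z‖ < ρ := by
    have h1 : k * ‖y - z‖^2 < k * ρ^2 := by
      have : k * ρ^2 = U - V := by rw [hk]; field_simp
      linarith [hψ0 y]
    exact lt_of_pow_lt_pow_left₀ 2 hρ0.le (lt_of_mul_lt_mul_left h1 hk0.le)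
  obtain ⟨c, hc, hcd⟩ := hψc y
  have hyc : dist y (xs + c • e) < r/2 := by
    have h1 : N * dist y (xs + c • e)^2 < N * (r/2)^2 := by
      have : N * (r/2)^2 = U - V := by rw [hN]; field_simp
      linarith
    exact lt_of_pow_lt_pow_left₀ 2 (by linarith) (lt_of_mul_lt_mul_left h1 (by positivity))
  have hpK : xs + c • e ∈ K := ⟨c, hc, rfl⟩
  have hFy : F ∈ nhds y := hnear y _ hpK (by linarith)
  have hFz : F ∈ nhds z := by
    refine hnear z _ hpK ?_
    have h1 := dist_triangle z y (xs + c • e)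
    have h2 : dist z y < r/2 := by
      rw [dist_comm, dist_eq_norm]; exact hyz.trans_le (min_le_left _ _)
    linarith
  have hv := hsup (fun z' => -(k * ‖z' - y‖^2)) (quad_contDiff k y).neg z (hrΩ hz) (by
    refine Filter.Eventually.filter_mono nhdsWithin_le_nhds ?_
    filter_upwards [hFz] with z' hz'
    have := hmax' _ hy _ hz'
    rw [norm_sub_rev y z', norm_sub_rev y z] at this
    linarith)
  have hu := hsub (fun y' => k * ‖y' - z‖^2 + ψ y') ((quad_contDiff k z).add hψ) y (hrΩ hy) (by
    refine Filter.Eventually.filter_mono nhdsWithin_le_nhds ?_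
    filter_upwards [hFy] with y' hy'
    have := hmax' _ hy' _ hz
    linarith)
  obtain ⟨L1, hL1, hL1'⟩ := quad_hasFDerivAt k z y
  obtain ⟨L2, hL2, hL2'⟩ := quad_hasFDerivAt k y z
  obtain ⟨hv1, hv2⟩ := le_min_iff.1 hv
  have e1 := hL1.fun_neg.fderiv
  have e2 := (hL2.fun_add (hψ.differentiable (by norm_num) y).hasFDerivAt).fderiv
  have e1' : fderiv ℝ (fun z' => -(k * ‖z' - y‖^2)) z (z - xs) = -(k * (2 * inner ℝ (z - y) (z - xs))) := by
    rw [e1]; simp [hL1']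
  have e2' : fderiv ℝ (fun y' => k * ‖y' - z‖^2 + ψ y') y (y - xs) =
      k * (2 * inner ℝ (y - z) (y - xs)) + fderiv ℝ ψ y (y - xs) := by
    rw [e2]; simp [hL2']
  rw [e1'] at hv2
  rw [e2'] at hu
  have hgz : |g z - g y| < δ / 2 := by
    have := hgη z hz y hy (by
      rw [dist_comm, dist_eq_norm]; exact hyz.trans_le (min_le_right _ _))
    rwa [Real.dist_eq] at this
  have hug : 0 < u y - g y := by
    have := (abs_lt.1 hgz).1
    linarith [hψ0 y]
  have hyne : y ≠ xs := by
    rintro rfl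
    linarith
  have hp := hψd y hyne
  have hfin : k * (2 * inner ℝ (y - z) (y - xs)) + fderiv ℝ ψ y (y - xs) ≤ 0 := by
    rcases min_le_iff.1 hu with h | h
    · linarith
    · exact h
  have hid : (inner ℝ (y - z) (y - xs) : ℝ) + inner ℝ (z - y) (z - xs) = ‖y - z‖^2 := by
    rw [← neg_sub y z, inner_neg_left, ← sub_eq_add_neg, ← inner_sub_right, sub_sub_sub_cancel_right,
      real_inner_self_eq_norm_sq]
  have : k * (2 * inner ℝ (y - z) (y - xs)) + k * (2 * inner ℝ (z - y) (z - xs))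
      = 2 * (k * ‖y - z‖^2) := by rw [← hid]; ring
  linarith
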